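/- arXiv:math/0310273 — 3 statements merged into one kernel-verified Lean document; each statement's English description precedes it below -/
import Mathlib

section
/- Fix a real number t with 0 < t < 1. There exists a constant K(t) > 0, depending only on t, such that for every admissible labeling (a,b,e;c,d,f) of the edges of a tetrahedron with column sums C_1 ≥ C_2 ≥ C_3, the unitary 6j-symbol satisfies |{a,b,e;c,d,f}_u| ≤ K(t)·t^{(C_1−C_2)(C_1−C_3)/2 + C_1}. In fact one may take K(t) = (1−q)/((q;q)_∞)^9. -/
open Filter Finset

/-- A triple of nonnegative integers is admissible if its sum is even and
it satisfies every triangle inequality. -/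
def Admissible (a b c : ℕ) : Prop :=
  Even (a + b + c) ∧ a ≤ b + c ∧ b ≤ a + c ∧ c ≤ a + b

/-- A labeling (a,b,e;c,d,f) of the edges of a tetrahedron is admissible if the
four vertex triples (a,d,e), (b,c,e), (a,b,f), (c,d,f) are admissible. -/
def TetAdmissible (a b e c d f : ℕ) : Prop :=
  Admissible a d e ∧ Admissible b c e ∧ Admissible a b f ∧ Admissible c d f

/-- The quantized integer `[n] = (t^{2n} - t^{-2n})/(t^2 - t^{-2})`. -/
noncomputable def qint (t : ℝ) (n : ℕ) : ℝ :=
  (t ^ (2 * n) - (t ^ (2 * n))⁻¹) / (t ^ 2 - (t ^ 2)⁻¹)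

/-- The quantized factorial `[n]! = [n]·[n-1]!`, `[0]! = 1`. -/
noncomputable def qfact (t : ℝ) : ℕ → ℝ
  | 0 => 1
  | n + 1 => qint t (n + 1) * qfact t n

/-- `θ(a,b,c)` for an admissible triple. -/
noncomputable def qtheta (t : ℝ) (a b c : ℕ) : ℝ :=
  (-1 : ℝ) ^ ((a + b + c) / 2) *
    (qfact t ((a + b + c) / 2 + 1) * qfact t ((a + b - c) / 2) *
      qfact t ((a + c - b) / 2) * qfact t ((b + c - a) / 2)) /
    (qfact t a * qfact t b * qfact t c)

/-- Product of the quantized factorials of the strand numbers of a triple. -/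
noncomputable def strandProd (t : ℝ) (a b c : ℕ) : ℝ :=
  qfact t ((a + b - c) / 2) * qfact t ((b + c - a) / 2) * qfact t ((a + c - b) / 2)

/-- The tetrahedral coefficient `Tet(a,b,e;c,d,f)`. -/
noncomputable def Tet (t : ℝ) (a b e c d f : ℕ) : ℝ :=
  (strandProd t a d e * strandProd t b c e * strandProd t a b f * strandProd t c d f) /
      (qfact t a * qfact t b * qfact t c * qfact t d * qfact t e * qfact t f) *
    ∑ s ∈ Finset.Icc
        (max ((a + d + e) / 2) (max ((b + c + e) / 2) (max ((a + b + f) / 2) ((c + d + f) / 2))))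
        (min ((a + b + c + d) / 2) (min ((a + c + e + f) / 2) ((b + d + e + f) / 2))),
      ((-1 : ℝ) ^ s * qfact t (s + 1)) /
        (qfact t ((a + b + c + d) / 2 - s) * qfact t ((a + c + e + f) / 2 - s) *
          qfact t ((b + d + e + f) / 2 - s) *
          qfact t (s - (a + d + e) / 2) * qfact t (s - (b + c + e) / 2) *
          qfact t (s - (a + b + f) / 2) * qfact t (s - (c + d + f) / 2))

/-- The unitary 6j-symbol `{a,b,e;c,d,f}_u`. -/
noncomputable def sixj (t : ℝ) (a b e c d f : ℕ) : ℝ :=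
  Tet t a b e c d f /
    Real.sqrt (qtheta t a d e * qtheta t b c e * qtheta t a b f * qtheta t c d f)

/-- The q-Pochhammer symbol `(x;q)_n`. -/
noncomputable def qPoch (x q : ℝ) (n : ℕ) : ℝ := ∏ i ∈ Finset.range n, (1 - x * q ^ i)

/-- The infinite q-Pochhammer symbol `(x;q)_∞`. -/
noncomputable def qPochInf (x q : ℝ) : ℝ := ∏' i : ℕ, (1 - x * q ^ i)

theorem qPoch_self_pos {q : ℝ} (h0 : 0 < q) (h1 : q < 1) (n : ℕ) : 0 < qPoch q q n :=
  Finset.prod_pos fun i _ => by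
    rw [← pow_succ']
    exact sub_pos.2 (pow_lt_one₀ h0.le h1 i.succ_ne_zero)

theorem qPoch_self_antitone {q : ℝ} (h0 : 0 < q) (h1 : q < 1) : Antitone (qPoch q q) := by
  refine antitone_nat_of_succ_le fun n => ?_
  have hstep : qPoch q q (n + 1) = qPoch q q n * (1 - q * q ^ n) :=
    Finset.prod_range_succ _ n
  rw [hstep]
  refine mul_le_of_le_one_right (qPoch_self_pos h0 h1 n).le ?_
  have : 0 < q * q ^ n := by positivity
  linarith

theorem qPoch_self_le_one {q : ℝ} (h0 : 0 < q) (h1 : q < 1) (n : ℕ) : qPoch q q n ≤ 1 := by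
  simpa [qPoch] using qPoch_self_antitone h0 h1 n.zero_le

theorem qPoch_self_succ_le {q : ℝ} (h0 : 0 < q) (h1 : q < 1) (n : ℕ) :
    qPoch q q (n + 1) ≤ 1 - q := by
  simpa [qPoch] using qPoch_self_antitone h0 h1 (Nat.le_add_left 1 n)

theorem qPochInf_self_pos {q : ℝ} (h0 : 0 < q) (h1 : q < 1) : 0 < qPochInf q q := by
  have hs : Summable fun i : ℕ => -(q * q ^ i) :=
    ((summable_geometric_of_lt_one h0.le h1).mul_left q).neg
  have hl := Real.summable_log_one_add_of_summable hs
  have hpos : ∀ i : ℕ, 0 < 1 + -(q * q ^ i) := fun i => by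
    rw [← pow_succ', ← sub_eq_add_neg]
    exact sub_pos.2 (pow_lt_one₀ h0.le h1 i.succ_ne_zero)
  have h := Real.rexp_tsum_eq_tprod hpos hl
  simp only [← sub_eq_add_neg] at h
  rw [qPochInf, ← h]
  exact Real.exp_pos _

theorem qPochInf_self_le {q : ℝ} (h0 : 0 < q) (h1 : q < 1) (n : ℕ) :
    qPochInf q q ≤ qPoch q q n := by
  have hs : Summable fun i : ℕ => -(q * q ^ i) :=
    ((summable_geometric_of_lt_one h0.le h1).mul_left q).neg
  have hm : Multipliable fun i : ℕ => 1 - q * q ^ i := by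
    simpa only [← sub_eq_add_neg] using Real.multipliable_one_add_of_summable hs
  exact (qPoch_self_antitone h0 h1).le_of_tendsto hm.hasProd.tendsto_prod_nat n

theorem qfact_eq {t : ℝ} (ht0 : 0 < t) (ht1 : t < 1) (n : ℕ) :
    qfact t n = t ^ (-((n : ℤ) * (n - 1))) * (1 - t ^ 4) ^ (-(n : ℤ)) *
      qPoch (t ^ 4) (t ^ 4) n := by
  have hw : (1 - t ^ 4) ≠ 0 := (sub_pos.2 (pow_lt_one₀ ht0.le ht1 (by norm_num))).ne'
  induction n with
  | zero => simp [qfact, qPoch]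
  | succ n ih =>
    have hstep : qPoch (t ^ 4) (t ^ 4) (n + 1) =
        qPoch (t ^ 4) (t ^ 4) n * (1 - t ^ 4 * (t ^ 4) ^ n) := Finset.prod_range_succ _ n
    have hq : qint t (n + 1) =
        t ^ (-(2 * (n : ℤ))) * (1 - t ^ 4) ^ (-1 : ℤ) * (1 - t ^ 4 * (t ^ 4) ^ n) := by
      have hd : t ^ 2 - (t ^ 2)⁻¹ = -(1 - t ^ 4) / t ^ 2 := by field_simp; ring
      have hz : t ^ (-(2 * (n : ℤ))) = (t ^ (2 * n))⁻¹ := by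
        rw [zpow_neg]; congr 1
      rw [qint, hd, hz, zpow_neg_one]
      field_simp
      ring
    have e1 : -(((n + 1 : ℕ) : ℤ) * (((n + 1 : ℕ) : ℤ) - 1)) =
        -(2 * (n : ℤ)) + -((n : ℤ) * (n - 1)) := by push_cast; ring
    have e2 : -((n + 1 : ℕ) : ℤ) = -1 + -(n : ℤ) := by push_cast; ring
    rw [qfact, ih, hq, hstep, e1, e2, zpow_add₀ ht0.ne', zpow_add₀ hw]
    ring

theorem qfact_pos {t : ℝ} (ht0 : 0 < t) (ht1 : t < 1) (n : ℕ) : 0 < qfact t n := by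
  have h1 : t ^ 4 < 1 := pow_lt_one₀ ht0.le ht1 (by norm_num)
  rw [qfact_eq ht0 ht1]
  have := qPoch_self_pos (pow_pos ht0 4) h1 n
  have := sub_pos.2 h1
  positivity

/-- Bound for the quantized factorials of the `B_i - A` against `[A+1]!`. -/
theorem qfact_column_le {t : ℝ} (ht0 : 0 < t) (ht1 : t < 1) {A B₁ B₂ B₃ : ℕ}
    (h₁ : A ≤ B₁) (h₂ : A ≤ B₂) (h₃ : A ≤ B₃) :
    qfact t (B₁ - A) * qfact t (B₂ - A) * qfact t (B₃ - A) / qfact t (A + 1) ≤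
      t ^ ((A : ℤ) * (A + 1) - ((B₁ : ℤ) - A) * (B₁ - A - 1) - ((B₂ : ℤ) - A) * (B₂ - A - 1)
          - ((B₃ : ℤ) - A) * (B₃ - A - 1)) *
        (1 - t ^ 4) ^ (4 * (A : ℤ) + 1 - (B₁ + B₂ + B₃)) *
        (qPochInf (t ^ 4) (t ^ 4))⁻¹ := by
  have h1 : t ^ 4 < 1 := pow_lt_one₀ ht0.le ht1 (by norm_num)
  have hw : 0 < 1 - t ^ 4 := sub_pos.2 h1
  have hq := pow_pos ht0 4
  have hI := qPochInf_self_pos hq h1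
  have hpos := qPoch_self_pos hq h1
  have hle := qPoch_self_le_one hq h1
  have hP : qPoch (t ^ 4) (t ^ 4) (B₁ - A) * qPoch (t ^ 4) (t ^ 4) (B₂ - A) *
      qPoch (t ^ 4) (t ^ 4) (B₃ - A) / qPoch (t ^ 4) (t ^ 4) (A + 1) ≤
      (qPochInf (t ^ 4) (t ^ 4))⁻¹ := by
    rw [← one_div]
    refine div_le_div₀ zero_le_one ?_ hI (qPochInf_self_le hq h1 _)
    exact mul_le_one₀ (mul_le_one₀ (hle _) (hpos _).le (hle _)) (hpos _).le (hle _)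
  refine le_of_eq_of_le ?_ (mul_le_mul_of_nonneg_left hP (by positivity))
  simp only [qfact_eq ht0 ht1]
  have et : t ^ ((A : ℤ) * (A + 1) - ((B₁ : ℤ) - A) * (B₁ - A - 1) -
      ((B₂ : ℤ) - A) * (B₂ - A - 1) - ((B₃ : ℤ) - A) * (B₃ - A - 1)) =
      t ^ (-(((B₁ - A : ℕ) : ℤ) * ((B₁ - A : ℕ) - 1))) *
      t ^ (-(((B₂ - A : ℕ) : ℤ) * ((B₂ - A : ℕ) - 1))) *
      t ^ (-(((B₃ - A : ℕ) : ℤ) * ((B₃ - A : ℕ) - 1))) /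
      t ^ (-(((A + 1 : ℕ) : ℤ) * ((A + 1 : ℕ) - 1))) := by
    rw [← zpow_add₀ ht0.ne', ← zpow_add₀ ht0.ne', ← zpow_sub₀ ht0.ne']
    congr 1
    push_cast [Nat.cast_sub h₁, Nat.cast_sub h₂, Nat.cast_sub h₃]
    ring
  have ew : (1 - t ^ 4) ^ (4 * (A : ℤ) + 1 - (B₁ + B₂ + B₃)) =
      (1 - t ^ 4) ^ (-((B₁ - A : ℕ) : ℤ)) * (1 - t ^ 4) ^ (-((B₂ - A : ℕ) : ℤ)) *
      (1 - t ^ 4) ^ (-((B₃ - A : ℕ) : ℤ)) / (1 - t ^ 4) ^ (-((A + 1 : ℕ) : ℤ)) := by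
    rw [← zpow_add₀ hw.ne', ← zpow_add₀ hw.ne', ← zpow_sub₀ hw.ne']
    congr 1
    push_cast [Nat.cast_sub h₁, Nat.cast_sub h₂, Nat.cast_sub h₃]
    ring
  rw [et, ew]
  simp only [div_mul_div_comm]
  congr 1
  ring

/-- The order in `t` of the summand with index `s` of the tetrahedral coefficient. -/
def tetOrder (A₁ A₂ A₃ A₄ B₁ B₂ B₃ s : ℤ) : ℤ :=
  -(s * (s + 1)) + (B₁ - s) * (B₁ - s - 1) + (B₂ - s) * (B₂ - s - 1) +
    (B₃ - s) * (B₃ - s - 1) + (s - A₁) * (s - A₁ - 1) + (s - A₂) * (s - A₂ - 1) +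
    (s - A₃) * (s - A₃ - 1) + (s - A₄) * (s - A₄ - 1)

theorem tetOrder_ge {A₁ A₂ A₃ A₄ B₁ B₂ B₃ s M : ℤ} (hs : s ≤ M)
    (hAB : A₁ + A₂ + A₃ + A₄ = B₁ + B₂ + B₃) (hM : 3 * M ≤ B₁ + B₂ + B₃) :
    tetOrder A₁ A₂ A₃ A₄ B₁ B₂ B₃ M + 4 * (M - s) ≤ tetOrder A₁ A₂ A₃ A₄ B₁ B₂ B₃ s := by
  obtain rfl : A₁ = B₁ + B₂ + B₃ - A₂ - A₃ - A₄ := by linarith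
  have h1 := mul_nonneg (sub_nonneg.2 hs) (sub_nonneg.2 hM)
  have h2 : 0 ≤ (M - s) * (M - s - 1) := by
    rcases hs.eq_or_lt with rfl | h
    · simp
    · exact mul_nonneg (by omega) (by omega)
  unfold tetOrder
  nlinarith

theorem tet_summand_eq {t : ℝ} (ht0 : 0 < t) (ht1 : t < 1) {A₁ A₂ A₃ A₄ B₁ B₂ B₃ s : ℕ}
    (hAB : A₁ + A₂ + A₃ + A₄ = B₁ + B₂ + B₃)
    (a₁ : A₁ ≤ s) (a₂ : A₂ ≤ s) (a₃ : A₃ ≤ s) (a₄ : A₄ ≤ s)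
    (b₁ : s ≤ B₁) (b₂ : s ≤ B₂) (b₃ : s ≤ B₃) :
    qfact t (s + 1) / (qfact t (B₁ - s) * qfact t (B₂ - s) * qfact t (B₃ - s) *
      qfact t (s - A₁) * qfact t (s - A₂) * qfact t (s - A₃) * qfact t (s - A₄)) =
    t ^ tetOrder A₁ A₂ A₃ A₄ B₁ B₂ B₃ s * (1 - t ^ 4)⁻¹ *
      (qPoch (t ^ 4) (t ^ 4) (s + 1) / (qPoch (t ^ 4) (t ^ 4) (B₁ - s) *
        qPoch (t ^ 4) (t ^ 4) (B₂ - s) * qPoch (t ^ 4) (t ^ 4) (B₃ - s) *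
        qPoch (t ^ 4) (t ^ 4) (s - A₁) * qPoch (t ^ 4) (t ^ 4) (s - A₂) *
        qPoch (t ^ 4) (t ^ 4) (s - A₃) * qPoch (t ^ 4) (t ^ 4) (s - A₄))) := by
  have hw : 0 < 1 - t ^ 4 := sub_pos.2 (pow_lt_one₀ ht0.le ht1 (by norm_num))
  have hAB' : (A₁ : ℤ) = B₁ + B₂ + B₃ - A₂ - A₃ - A₄ := by omega
  have et : t ^ tetOrder A₁ A₂ A₃ A₄ B₁ B₂ B₃ s =
      t ^ (-(((s + 1 : ℕ) : ℤ) * ((s + 1 : ℕ) - 1))) /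
      (t ^ (-(((B₁ - s : ℕ) : ℤ) * ((B₁ - s : ℕ) - 1))) *
      t ^ (-(((B₂ - s : ℕ) : ℤ) * ((B₂ - s : ℕ) - 1))) *
      t ^ (-(((B₃ - s : ℕ) : ℤ) * ((B₃ - s : ℕ) - 1))) *
      t ^ (-(((s - A₁ : ℕ) : ℤ) * ((s - A₁ : ℕ) - 1))) *
      t ^ (-(((s - A₂ : ℕ) : ℤ) * ((s - A₂ : ℕ) - 1))) *
      t ^ (-(((s - A₃ : ℕ) : ℤ) * ((s - A₃ : ℕ) - 1))) *
      t ^ (-(((s - A₄ : ℕ) : ℤ) * ((s - A₄ : ℕ) - 1)))) := by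
    simp only [← zpow_add₀ ht0.ne', ← zpow_sub₀ ht0.ne']
    congr 1
    push_cast [Nat.cast_sub a₁, Nat.cast_sub a₂, Nat.cast_sub a₃, Nat.cast_sub a₄,
      Nat.cast_sub b₁, Nat.cast_sub b₂, Nat.cast_sub b₃]
    unfold tetOrder
    ring
  have ew : (1 - t ^ 4)⁻¹ = (1 - t ^ 4) ^ (-((s + 1 : ℕ) : ℤ)) /
      ((1 - t ^ 4) ^ (-((B₁ - s : ℕ) : ℤ)) * (1 - t ^ 4) ^ (-((B₂ - s : ℕ) : ℤ)) *
      (1 - t ^ 4) ^ (-((B₃ - s : ℕ) : ℤ)) * (1 - t ^ 4) ^ (-((s - A₁ : ℕ) : ℤ)) *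
      (1 - t ^ 4) ^ (-((s - A₂ : ℕ) : ℤ)) * (1 - t ^ 4) ^ (-((s - A₃ : ℕ) : ℤ)) *
      (1 - t ^ 4) ^ (-((s - A₄ : ℕ) : ℤ))) := by
    simp only [← zpow_add₀ hw.ne', ← zpow_sub₀ hw.ne']
    rw [← zpow_neg_one]
    congr 1
    push_cast [Nat.cast_sub a₁, Nat.cast_sub a₂, Nat.cast_sub a₃, Nat.cast_sub a₄,
      Nat.cast_sub b₁, Nat.cast_sub b₂, Nat.cast_sub b₃]
    linarith
  rw [et, ew]
  simp only [qfact_eq ht0 ht1, div_mul_div_comm]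
  congr 1
  ring

theorem tet_summand_le {t : ℝ} (ht0 : 0 < t) (ht1 : t < 1) {A₁ A₂ A₃ A₄ B₁ B₂ B₃ s M : ℕ}
    (hAB : A₁ + A₂ + A₃ + A₄ = B₁ + B₂ + B₃)
    (a₁ : A₁ ≤ s) (a₂ : A₂ ≤ s) (a₃ : A₃ ≤ s) (a₄ : A₄ ≤ s) (hs : s ≤ M)
    (b₁ : M ≤ B₁) (b₂ : M ≤ B₂) (b₃ : M ≤ B₃) :
    qfact t (s + 1) / (qfact t (B₁ - s) * qfact t (B₂ - s) * qfact t (B₃ - s) *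
      qfact t (s - A₁) * qfact t (s - A₂) * qfact t (s - A₃) * qfact t (s - A₄)) ≤
    t ^ tetOrder A₁ A₂ A₃ A₄ B₁ B₂ B₃ M * (qPochInf (t ^ 4) (t ^ 4))⁻¹ ^ 7 *
      (t ^ 4) ^ (M - s) := by
  have h1 : t ^ 4 < 1 := pow_lt_one₀ ht0.le ht1 (by norm_num)
  have hw : 0 < 1 - t ^ 4 := sub_pos.2 h1
  have hq := pow_pos ht0 4
  have hI := qPochInf_self_pos hq h1
  have hIle := qPochInf_self_le hq h1
  have hpos := qPoch_self_pos hq h1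
  rw [tet_summand_eq ht0 ht1 hAB a₁ a₂ a₃ a₄ (hs.trans b₁) (hs.trans b₂) (hs.trans b₃)]
  set p := qPoch (t ^ 4) (t ^ 4) with hp
  set I := qPochInf (t ^ 4) (t ^ 4) with hIdef
  have hP : p (s + 1) / (p (B₁ - s) * p (B₂ - s) * p (B₃ - s) *
      p (s - A₁) * p (s - A₂) * p (s - A₃) * p (s - A₄)) ≤ (1 - t ^ 4) / I ^ 7 := by
    have h7 : I ^ 7 ≤ p (B₁ - s) * p (B₂ - s) * p (B₃ - s) *
        p (s - A₁) * p (s - A₂) * p (s - A₃) * p (s - A₄) := by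
      have e : I ^ 7 = I * I * I * I * I * I * I := by ring
      have hp0 : ∀ n, 0 ≤ p n := fun n => (hpos n).le
      have := hI.le
      rw [e]
      gcongr <;> first
        | exact hIle _
        | (repeat' apply mul_nonneg) <;> exact hp0 _
    exact div_le_div₀ hw.le (qPoch_self_succ_le hq h1 s) (by positivity) h7
  have hT : t ^ tetOrder A₁ A₂ A₃ A₄ B₁ B₂ B₃ s ≤
      t ^ tetOrder A₁ A₂ A₃ A₄ B₁ B₂ B₃ M * (t ^ 4) ^ (M - s) := by
    have e : (t ^ 4) ^ (M - s) = t ^ (4 * ((M : ℤ) - s)) := by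
      rw [← pow_mul, ← zpow_natCast]
      push_cast [Nat.cast_sub hs]
      rfl
    rw [e, ← zpow_add₀ ht0.ne']
    refine zpow_le_zpow_right_of_le_one₀ ht0 ht1.le ?_
    exact tetOrder_ge (by omega) (by omega) (by omega)
  calc _ ≤ (t ^ tetOrder A₁ A₂ A₃ A₄ B₁ B₂ B₃ M * (t ^ 4) ^ (M - s)) * (1 - t ^ 4)⁻¹ *
        ((1 - t ^ 4) / I ^ 7) := by
        refine mul_le_mul (mul_le_mul_of_nonneg_right hT (inv_nonneg.2 hw.le)) hP ?_
          (by positivity)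
        refine div_nonneg (hpos _).le ?_
        (repeat' apply mul_nonneg) <;> exact (hpos _).le
    _ = _ := by field_simp

theorem sum_Icc_pow_sub_le {q : ℝ} (h0 : 0 < q) (h1 : q < 1) (m M : ℕ) :
    (1 - q) * ∑ s ∈ Finset.Icc m M, q ^ (M - s) ≤ 1 := by
  have hsub : ∑ s ∈ Finset.Icc m M, q ^ (M - s) ≤ ∑ s ∈ Finset.range (M + 1), q ^ (M - s) :=
    Finset.sum_le_sum_of_subset_of_nonneg
      (fun s hs => by simp only [Finset.mem_Icc, Finset.mem_range] at hs ⊢; omega)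
      fun _ _ _ => by positivity
  have hrefl : ∑ s ∈ Finset.range (M + 1), q ^ (M - s) = ∑ s ∈ Finset.range (M + 1), q ^ s := by
    simpa using Finset.sum_range_reflect (fun s => q ^ s) (M + 1)
  rw [hrefl] at hsub
  calc _ ≤ (1 - q) * ∑ s ∈ Finset.range (M + 1), q ^ s :=
        mul_le_mul_of_nonneg_left hsub (sub_nonneg.2 h1.le)
    _ = 1 - q ^ (M + 1) := mul_neg_geom_sum q (M + 1)
    _ ≤ 1 := sub_le_self _ (by positivity)

theorem abs_tet_sum_le {t : ℝ} (ht0 : 0 < t) (ht1 : t < 1) {A₁ A₂ A₃ A₄ B₁ B₂ B₃ m M : ℕ}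
    (hAB : A₁ + A₂ + A₃ + A₄ = B₁ + B₂ + B₃)
    (a₁ : A₁ ≤ m) (a₂ : A₂ ≤ m) (a₃ : A₃ ≤ m) (a₄ : A₄ ≤ m)
    (b₁ : M ≤ B₁) (b₂ : M ≤ B₂) (b₃ : M ≤ B₃) :
    |∑ s ∈ Finset.Icc m M, ((-1 : ℝ) ^ s * qfact t (s + 1)) /
      (qfact t (B₁ - s) * qfact t (B₂ - s) * qfact t (B₃ - s) *
      qfact t (s - A₁) * qfact t (s - A₂) * qfact t (s - A₃) * qfact t (s - A₄))| ≤
    t ^ tetOrder A₁ A₂ A₃ A₄ B₁ B₂ B₃ M * (qPochInf (t ^ 4) (t ^ 4))⁻¹ ^ 7 *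
      (1 - t ^ 4)⁻¹ := by
  have h1 : t ^ 4 < 1 := pow_lt_one₀ ht0.le ht1 (by norm_num)
  have hw : 0 < 1 - t ^ 4 := sub_pos.2 h1
  have hI := qPochInf_self_pos (pow_pos ht0 4) h1
  calc _ ≤ ∑ s ∈ Finset.Icc m M, t ^ tetOrder A₁ A₂ A₃ A₄ B₁ B₂ B₃ M *
        (qPochInf (t ^ 4) (t ^ 4))⁻¹ ^ 7 * (t ^ 4) ^ (M - s) := by
        refine (Finset.abs_sum_le_sum_abs _ _).trans (Finset.sum_le_sum fun s hs => ?_)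
        obtain ⟨hms, hsM⟩ := Finset.mem_Icc.1 hs
        refine le_of_eq_of_le ?_ (tet_summand_le ht0 ht1 hAB (a₁.trans hms) (a₂.trans hms)
          (a₃.trans hms) (a₄.trans hms) hsM b₁ b₂ b₃)
        have hf : ∀ n, |qfact t n| = qfact t n := fun n => abs_of_pos (qfact_pos ht0 ht1 n)
        simp only [abs_div, abs_mul, abs_pow, abs_neg, abs_one, one_pow, one_mul, hf]
    _ ≤ _ := by
        rw [← Finset.mul_sum]
        refine mul_le_mul_of_nonneg_left ?_ (by positivity)
        rw [← one_div, le_div_iff₀' hw]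
        exact sum_Icc_pow_sub_le (pow_pos ht0 4) h1 m M

theorem qfact_columns_le {t : ℝ} (ht0 : 0 < t) (ht1 : t < 1) {A₁ A₂ A₃ A₄ B₁ B₂ B₃ M : ℕ}
    {E : ℤ} (hAB : A₁ + A₂ + A₃ + A₄ = B₁ + B₂ + B₃)
    (a₁ : A₁ ≤ M) (a₂ : A₂ ≤ M) (a₃ : A₃ ≤ M) (a₄ : A₄ ≤ M)
    (b₁ : M ≤ B₁) (b₂ : M ≤ B₂) (b₃ : M ≤ B₃)
    (hE : E = (B₁ + B₂ + B₃ : ℤ) ^ 2 - (B₁ ^ 2 + B₂ ^ 2 + B₃ ^ 2) + 6 * M ^ 2 -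
      4 * M * (B₁ + B₂ + B₃) + (B₁ + B₂ + B₃) - 2 * M) :
    (qfact t (B₁ - A₁) * qfact t (B₂ - A₁) * qfact t (B₃ - A₁) / qfact t (A₁ + 1)) *
    (qfact t (B₁ - A₂) * qfact t (B₂ - A₂) * qfact t (B₃ - A₂) / qfact t (A₂ + 1)) *
    (qfact t (B₁ - A₃) * qfact t (B₂ - A₃) * qfact t (B₃ - A₃) / qfact t (A₃ + 1)) *
    (qfact t (B₁ - A₄) * qfact t (B₂ - A₄) * qfact t (B₃ - A₄) / qfact t (A₄ + 1)) ≤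
    (t ^ (E - tetOrder A₁ A₂ A₃ A₄ B₁ B₂ B₃ M) * (1 - t ^ 4) ^ 2 *
      (qPochInf (t ^ 4) (t ^ 4))⁻¹ ^ 2) ^ 2 := by
  have h1 : t ^ 4 < 1 := pow_lt_one₀ ht0.le ht1 (by norm_num)
  have hw : 0 < 1 - t ^ 4 := sub_pos.2 h1
  have hI := qPochInf_self_pos (pow_pos ht0 4) h1
  have hcol := fun {A : ℕ} (h : A ≤ M) =>
    qfact_column_le ht0 ht1 (h.trans b₁) (h.trans b₂) (h.trans b₃)
  have hnn : ∀ A : ℕ, 0 ≤ qfact t (B₁ - A) * qfact t (B₂ - A) * qfact t (B₃ - A) /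
      qfact t (A + 1) := fun A => by
    have hf := fun n => (qfact_pos ht0 ht1 n).le
    exact div_nonneg (mul_nonneg (mul_nonneg (hf _) (hf _)) (hf _)) (hf _)
  have h := mul_le_mul (mul_le_mul (mul_le_mul (hcol a₁) (hcol a₂) (hnn _) (by positivity))
    (hcol a₃) (hnn _) (by positivity)) (hcol a₄) (hnn _) (by positivity)
  refine h.trans (le_of_eq ?_)
  have hAB' : (A₁ : ℤ) = B₁ + B₂ + B₃ - A₂ - A₃ - A₄ := by omega
  have et : (t ^ (E - tetOrder A₁ A₂ A₃ A₄ B₁ B₂ B₃ M)) ^ 2 =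
      t ^ ((A₁ : ℤ) * (A₁ + 1) - ((B₁ : ℤ) - A₁) * (B₁ - A₁ - 1) -
        ((B₂ : ℤ) - A₁) * (B₂ - A₁ - 1) - ((B₃ : ℤ) - A₁) * (B₃ - A₁ - 1)) *
      t ^ ((A₂ : ℤ) * (A₂ + 1) - ((B₁ : ℤ) - A₂) * (B₁ - A₂ - 1) -
        ((B₂ : ℤ) - A₂) * (B₂ - A₂ - 1) - ((B₃ : ℤ) - A₂) * (B₃ - A₂ - 1)) *
      t ^ ((A₃ : ℤ) * (A₃ + 1) - ((B₁ : ℤ) - A₃) * (B₁ - A₃ - 1) -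
        ((B₂ : ℤ) - A₃) * (B₂ - A₃ - 1) - ((B₃ : ℤ) - A₃) * (B₃ - A₃ - 1)) *
      t ^ ((A₄ : ℤ) * (A₄ + 1) - ((B₁ : ℤ) - A₄) * (B₁ - A₄ - 1) -
        ((B₂ : ℤ) - A₄) * (B₂ - A₄ - 1) - ((B₃ : ℤ) - A₄) * (B₃ - A₄ - 1)) := by
    rw [← zpow_natCast, ← zpow_mul]
    simp only [← zpow_add₀ ht0.ne']
    congr 1
    rw [hE, tetOrder, hAB']
    push_cast
    ring
  have ew : (1 - t ^ 4) ^ 4 = (1 - t ^ 4) ^ (4 * (A₁ : ℤ) + 1 - (B₁ + B₂ + B₃)) *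
      (1 - t ^ 4) ^ (4 * (A₂ : ℤ) + 1 - (B₁ + B₂ + B₃)) *
      (1 - t ^ 4) ^ (4 * (A₃ : ℤ) + 1 - (B₁ + B₂ + B₃)) *
      (1 - t ^ 4) ^ (4 * (A₄ : ℤ) + 1 - (B₁ + B₂ + B₃)) := by
    rw [← zpow_natCast]
    simp only [← zpow_add₀ hw.ne']
    congr 1
    push_cast
    linarith
  rw [mul_pow, mul_pow, et, ← pow_mul (1 - t ^ 4), ew]
  ring

theorem abs_qtheta {t : ℝ} (ht0 : 0 < t) (ht1 : t < 1) (a b c : ℕ) :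
    |qtheta t a b c| = qfact t ((a + b + c) / 2 + 1) * strandProd t a b c /
      (qfact t a * qfact t b * qfact t c) := by
  have hf : ∀ n, |qfact t n| = qfact t n := fun n => abs_of_pos (qfact_pos ht0 ht1 n)
  simp only [qtheta, strandProd, abs_div, abs_mul, abs_pow, abs_neg, abs_one, one_pow, one_mul, hf]
  ring

theorem strandProd_pos {t : ℝ} (ht0 : 0 < t) (ht1 : t < 1) (a b c : ℕ) :
    0 < strandProd t a b c :=
  mul_pos (mul_pos (qfact_pos ht0 ht1 _) (qfact_pos ht0 ht1 _)) (qfact_pos ht0 ht1 _)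

theorem abs_div_sqrt_le (x y : ℝ) : |x / √y| ≤ |x| / √|y| := by
  rcases le_total 0 y with h | h
  · rw [abs_div, abs_of_nonneg (Real.sqrt_nonneg _), abs_of_nonneg h]
  · rw [Real.sqrt_eq_zero_of_nonpos h, div_zero, abs_zero]
    positivity

theorem abs_sixj_le_sqrt_mul {t : ℝ} (ht0 : 0 < t) (ht1 : t < 1) (a b e c d f : ℕ) {S : ℝ}
    (hS : Tet t a b e c d f =
      (strandProd t a d e * strandProd t b c e * strandProd t a b f * strandProd t c d f) /
      (qfact t a * qfact t b * qfact t c * qfact t d * qfact t e * qfact t f) * S) :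
    |sixj t a b e c d f| ≤
      √((strandProd t a d e * strandProd t b c e * strandProd t a b f * strandProd t c d f) /
        (qfact t ((a + d + e) / 2 + 1) * qfact t ((b + c + e) / 2 + 1) *
          qfact t ((a + b + f) / 2 + 1) * qfact t ((c + d + f) / 2 + 1))) * |S| := by
  refine (abs_div_sqrt_le _ _).trans (le_of_eq ?_)
  have hf := qfact_pos ht0 ht1
  have hs := strandProd_pos ht0 ht1
  rw [hS, abs_mul, abs_mul, abs_mul, abs_mul, abs_qtheta ht0 ht1, abs_qtheta ht0 ht1,
    abs_qtheta ht0 ht1, abs_qtheta ht0 ht1]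
  set Z := strandProd t a d e * strandProd t b c e * strandProd t a b f * strandProd t c d f
    with hZ
  set N := qfact t ((a + d + e) / 2 + 1) * qfact t ((b + c + e) / 2 + 1) *
    qfact t ((a + b + f) / 2 + 1) * qfact t ((c + d + f) / 2 + 1) with hN
  set Q := qfact t a * qfact t b * qfact t c * qfact t d * qfact t e * qfact t f with hQ
  have hZ0 : 0 < Z := mul_pos (mul_pos (mul_pos (hs _ _ _) (hs _ _ _)) (hs _ _ _)) (hs _ _ _)
  have hN0 : 0 < N := mul_pos (mul_pos (mul_pos (hf _) (hf _)) (hf _)) (hf _)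
  have hQ0 : 0 < Q :=
    mul_pos (mul_pos (mul_pos (mul_pos (mul_pos (hf _) (hf _)) (hf _)) (hf _)) (hf _)) (hf _)
  have hθ : qfact t ((a + d + e) / 2 + 1) * strandProd t a d e /
        (qfact t a * qfact t d * qfact t e) *
      (qfact t ((b + c + e) / 2 + 1) * strandProd t b c e /
        (qfact t b * qfact t c * qfact t e)) *
      (qfact t ((a + b + f) / 2 + 1) * strandProd t a b f /
        (qfact t a * qfact t b * qfact t f)) *
      (qfact t ((c + d + f) / 2 + 1) * strandProd t c d f /
        (qfact t c * qfact t d * qfact t f)) = (Z / Q) ^ 2 / (Z / N) := by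
    have : (Z / Q) ^ 2 / (Z / N) = N * Z / Q ^ 2 := by field_simp
    rw [this, hZ, hN, hQ]
    simp only [div_mul_div_comm]
    congr 1 <;> ring
  rw [hθ, Real.sqrt_div (by positivity), Real.sqrt_sq (by positivity),
    abs_of_pos (div_pos hZ0 hQ0)]
  have : 0 < √(Z / N) := Real.sqrt_pos.2 (by positivity)
  field_simp

theorem strandProd_mul_eq (t : ℝ) {a b e c d f A₁ A₂ A₃ A₄ B₁ B₂ B₃ : ℕ}
    (hA₁ : a + d + e = 2 * A₁) (hA₂ : b + c + e = 2 * A₂) (hA₃ : a + b + f = 2 * A₃)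
    (hA₄ : c + d + f = 2 * A₄) (hB₁ : a + b + c + d = 2 * B₁) (hB₂ : a + c + e + f = 2 * B₂)
    (hB₃ : b + d + e + f = 2 * B₃) :
    strandProd t a d e * strandProd t b c e * strandProd t a b f * strandProd t c d f =
    (qfact t (B₁ - A₁) * qfact t (B₂ - A₁) * qfact t (B₃ - A₁)) *
    (qfact t (B₁ - A₂) * qfact t (B₂ - A₂) * qfact t (B₃ - A₂)) *
    (qfact t (B₁ - A₃) * qfact t (B₂ - A₃) * qfact t (B₃ - A₃)) *
    (qfact t (B₁ - A₄) * qfact t (B₂ - A₄) * qfact t (B₃ - A₄)) := by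
  have r₁ : (a + d - e) / 2 = B₁ - A₂ := by omega
  have r₂ : (d + e - a) / 2 = B₃ - A₃ := by omega
  have r₃ : (a + e - d) / 2 = B₂ - A₄ := by omega
  have r₄ : (b + c - e) / 2 = B₁ - A₁ := by omega
  have r₅ : (c + e - b) / 2 = B₂ - A₃ := by omega
  have r₆ : (b + e - c) / 2 = B₃ - A₄ := by omega
  have r₇ : (a + b - f) / 2 = B₁ - A₄ := by omega
  have r₈ : (b + f - a) / 2 = B₃ - A₁ := by omega
  have r₉ : (a + f - b) / 2 = B₂ - A₂ := by omega
  have r₁₀ : (c + d - f) / 2 = B₁ - A₃ := by omega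
  have r₁₁ : (d + f - c) / 2 = B₃ - A₂ := by omega
  have r₁₂ : (c + f - d) / 2 = B₂ - A₁ := by omega
  simp only [strandProd, r₁, r₂, r₃, r₄, r₅, r₆, r₇, r₈, r₉, r₁₀, r₁₁, r₁₂]
  ring

theorem abs_sixj_le_zpow {t : ℝ} (ht0 : 0 < t) (ht1 : t < 1)
    {a b e c d f A₁ A₂ A₃ A₄ B₁ B₂ B₃ M : ℕ} {E : ℤ}
    (hA₁ : a + d + e = 2 * A₁) (hA₂ : b + c + e = 2 * A₂) (hA₃ : a + b + f = 2 * A₃)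
    (hA₄ : c + d + f = 2 * A₄) (hB₁ : a + b + c + d = 2 * B₁) (hB₂ : a + c + e + f = 2 * B₂)
    (hB₃ : b + d + e + f = 2 * B₃) (hM : M = min B₁ (min B₂ B₃))
    (a₁ : A₁ ≤ M) (a₂ : A₂ ≤ M) (a₃ : A₃ ≤ M) (a₄ : A₄ ≤ M)
    (hE : E = (B₁ + B₂ + B₃ : ℤ) ^ 2 - (B₁ ^ 2 + B₂ ^ 2 + B₃ ^ 2) + 6 * M ^ 2 -
      4 * M * (B₁ + B₂ + B₃) + (B₁ + B₂ + B₃) - 2 * M) :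
    |sixj t a b e c d f| ≤ (1 - t ^ 4) / qPochInf (t ^ 4) (t ^ 4) ^ 9 * t ^ E := by
  have h1 : t ^ 4 < 1 := pow_lt_one₀ ht0.le ht1 (by norm_num)
  have hw : 0 < 1 - t ^ 4 := sub_pos.2 h1
  have hI := qPochInf_self_pos (pow_pos ht0 4) h1
  have hAB : A₁ + A₂ + A₃ + A₄ = B₁ + B₂ + B₃ := by omega
  have b₁ : M ≤ B₁ := by omega
  have b₂ : M ≤ B₂ := by omega
  have b₃ : M ≤ B₃ := by omega
  have half : ∀ n : ℕ, 2 * n / 2 = n := fun n => by omega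
  have hsix := abs_sixj_le_sqrt_mul ht0 ht1 a b e c d f rfl
  simp only [hA₁, hA₂, hA₃, hA₄, hB₁, hB₂, hB₃, half, ← hM] at hsix
  rw [strandProd_mul_eq t hA₁ hA₂ hA₃ hA₄ hB₁ hB₂ hB₃, ← div_mul_div_comm,
    ← div_mul_div_comm, ← div_mul_div_comm] at hsix
  have hroot := Real.sqrt_le_iff.2
    ⟨by positivity, qfact_columns_le ht0 ht1 hAB a₁ a₂ a₃ a₄ b₁ b₂ b₃ hE⟩
  have hsum := abs_tet_sum_le ht0 ht1 hAB (m := max A₁ (max A₂ (max A₃ A₄))) (by simp)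
    (by simp) (by simp) (by simp) b₁ b₂ b₃
  refine (hsix.trans (mul_le_mul hroot hsum (abs_nonneg _) (by positivity))).trans (le_of_eq ?_)
  rw [zpow_sub₀ ht0.ne']
  field_simp

theorem multiset_triple_eq {C1 C2 C3 x y z : ℕ}
    (hC : ({C1, C2, C3} : Multiset ℕ) = {x, y, z}) (h21 : C2 ≤ C1) (h32 : C3 ≤ C2) :
    C1 + C2 + C3 = x + y + z ∧ C1 ^ 2 + C2 ^ 2 + C3 ^ 2 = x ^ 2 + y ^ 2 + z ^ 2 ∧
      C1 = max x (max y z) ∧ (C2 = x ∨ C2 = y ∨ C2 = z) := by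
  have hm1 : C1 ∈ ({x, y, z} : Multiset ℕ) := by rw [← hC]; simp
  have hm2 : C2 ∈ ({x, y, z} : Multiset ℕ) := by rw [← hC]; simp
  have hx : ∀ w ∈ ({x, y, z} : Multiset ℕ), w ≤ C1 := by
    rw [← hC]
    simp [h21, h32.trans h21]
  simp only [Multiset.insert_eq_cons, Multiset.mem_cons, Multiset.mem_singleton,
    forall_eq_or_imp, forall_eq] at hm1 hm2 hx
  refine ⟨?_, ?_, by omega, hm2⟩
  · simpa [add_assoc] using congrArg Multiset.sum hC
  · have := congrArg (fun m : Multiset ℕ => (m.map (· ^ 2)).sum) hC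
    simpa only [Multiset.insert_eq_cons, Multiset.map_cons, Multiset.map_singleton,
      Multiset.sum_cons, Multiset.sum_singleton, add_assoc] using this

theorem column_exponent_eq {C1 C2 C3 x y z B₁ B₂ B₃ M : ℕ}
    (hsum : C1 + C2 + C3 = x + y + z)
    (hsq : C1 ^ 2 + C2 ^ 2 + C3 ^ 2 = x ^ 2 + y ^ 2 + z ^ 2)
    (hmax : C1 = max x (max y z)) (hC2 : C2 = x ∨ C2 = y ∨ C2 = z)
    (h21 : C2 ≤ C1) (h32 : C3 ≤ C2)
    (hB₁ : x + y = 2 * B₁) (hB₂ : x + z = 2 * B₂) (hB₃ : y + z = 2 * B₃)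
    (hM : M = min B₁ (min B₂ B₃)) :
    (((C1 - C2) * (C1 - C3) / 2 + C1 : ℕ) : ℤ) =
      (B₁ + B₂ + B₃ : ℤ) ^ 2 - (B₁ ^ 2 + B₂ ^ 2 + B₃ ^ 2) + 6 * M ^ 2 -
        4 * M * (B₁ + B₂ + B₃) + (B₁ + B₂ + B₃) - 2 * M := by
  have hMC : 2 * M + C1 = B₁ + B₂ + B₃ := by omega
  obtain ⟨u, hu⟩ : ∃ u, C1 = C2 + 2 * u := ⟨(C1 - C2) / 2, by omega⟩
  obtain ⟨v, hv⟩ : ∃ v, C1 = C3 + 2 * v := ⟨(C1 - C3) / 2, by omega⟩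
  have hexp : (C1 - C2) * (C1 - C3) / 2 + C1 = 2 * u * v + C1 := by
    have h₂ : C1 - C2 = 2 * u := by omega
    have h₃ : C1 - C3 = 2 * v := by omega
    rw [h₂, h₃, mul_assoc, Nat.mul_div_cancel_left _ two_pos]
    ring
  have hx : (x : ℤ) = B₁ + B₂ - B₃ := by omega
  have hy : (y : ℤ) = B₁ + B₃ - B₂ := by omega
  have hz : (z : ℤ) = B₂ + B₃ - B₁ := by omega
  have h1 : (C1 : ℤ) = B₁ + B₂ + B₃ - 2 * M := by omega
  have h2 : (C2 : ℤ) = B₁ + B₂ + B₃ - 2 * M - 2 * u := by omega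
  have h3 : (C3 : ℤ) = B₁ + B₂ + B₃ - 2 * M - 2 * v := by omega
  have hs : (u + v : ℤ) = B₁ + B₂ + B₃ - 3 * M := by omega
  rw [hexp]
  clear hexp hmax hC2 hM
  zify at hsq
  push_cast
  rw [h1]
  rw [h1, h2, h3, hx, hy, hz] at hsq
  obtain hv' : (v : ℤ) = B₁ + B₂ + B₃ - 3 * M - u := by linarith
  rw [hv'] at hsq ⊢
  nlinarith

/-- The constant K(t) = (1-q)/((q;q)_∞)^9 is positive and bounds the
unitary 6j-symbol: |{a,b,e;c,d,f}_u| ≤ K(t)·t^{(C₁−C₂)(C₁−C₃)/2 + C₁}. -/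
theorem stmt_4 (t : ℝ) (ht0 : 0 < t) (ht1 : t < 1) :
    0 < (1 - t ^ 4) / qPochInf (t ^ 4) (t ^ 4) ^ 9 ∧
    ∀ a b e c d f C1 C2 C3 : ℕ, TetAdmissible a b e c d f →
      ({C1, C2, C3} : Multiset ℕ) = {a + c, b + d, e + f} →
      C2 ≤ C1 → C3 ≤ C2 →
      |sixj t a b e c d f| ≤
        (1 - t ^ 4) / qPochInf (t ^ 4) (t ^ 4) ^ 9 *
          t ^ ((C1 - C2) * (C1 - C3) / 2 + C1) := by
  have h1 : t ^ 4 < 1 := pow_lt_one₀ ht0.le ht1 (by norm_num)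
  refine ⟨div_pos (sub_pos.2 h1) (pow_pos (qPochInf_self_pos (pow_pos ht0 4) h1) 9), ?_⟩
  intro a b e c d f C1 C2 C3 h hC h21 h32
  obtain ⟨hsum, hsq, hmax, hC2⟩ := multiset_triple_eq hC h21 h32
  obtain ⟨⟨⟨A₁, e₁⟩, u₁, v₁, w₁⟩, ⟨⟨A₂, e₂⟩, u₂, v₂, w₂⟩, ⟨⟨A₃, e₃⟩, u₃, v₃, w₃⟩,
    ⟨⟨A₄, e₄⟩, u₄, v₄, w₄⟩⟩ := h
  rw [← two_mul] at e₁ e₂ e₃ e₄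
  obtain ⟨B₁, hB₁⟩ : ∃ B, a + b + c + d = 2 * B := ⟨A₃ + A₄ - f, by omega⟩
  obtain ⟨B₂, hB₂⟩ : ∃ B, a + c + e + f = 2 * B := ⟨A₂ + A₃ - b, by omega⟩
  obtain ⟨B₃, hB₃⟩ : ∃ B, b + d + e + f = 2 * B := ⟨A₁ + A₃ - a, by omega⟩
  have hE := column_exponent_eq hsum hsq hmax hC2 h21 h32 (B₁ := B₁) (B₂ := B₂) (B₃ := B₃)
    (by linarith) (by linarith) (by linarith) rfl
  clear hC hsum hsq hmax hC2
  rw [← zpow_natCast t (_ + _)]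
  refine abs_sixj_le_zpow ht0 ht1 e₁ e₂ e₃ e₄ hB₁ hB₂ hB₃ rfl ?_ ?_ ?_ ?_ hE <;>
    refine le_min ?_ (le_min ?_ ?_) <;> clear hE <;> omega
end

section
/- Fix a real number t with 0 < t < 1 and set q = t^4. Let (a,b,e;c,d,f) be an admissible labeling of the edges of a tetrahedron and for m ≤ s ≤ M−1 define R(s) = t^{12s − 4(a+b+c+d+e+f) + 4} · (1 − q^{s+2}) · ∏_{i=1}^3 (1 − q^{B_i − s}) / ∏_{j=1}^4 (1 − q^{s+1−A_j}). Then R(s) is strictly decreasing in s: R(s+1) < R(s) whenever m ≤ s ≤ M−2. (R(s) is the ratio of the absolute values of the (s+1)-st and s-th terms of the alternating sum defining the tetrahedral coefficient, so the absolute values of these terms have a unique maximum.) -/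
open Filter Finset

/-- One step of a `q`-hypergeometric ratio with three numerator and four denominator factors,
where `z` does not exceed one of the denominator parameters. -/
theorem qratio_step_lt {T q z x₁ x₂ x₃ x₄ y₁ y₂ y₃ : ℝ} (hT : 0 < T) (hq0 : 0 < q) (hq1 : q < 1)
    (hz : z < 1) (hx₁0 : 0 ≤ x₁) (hx₁ : x₁ < 1) (hx₂0 : 0 ≤ x₂) (hx₂ : x₂ < 1)
    (hx₃0 : 0 ≤ x₃) (hx₃ : x₃ < 1) (hx₄0 : 0 ≤ x₄) (hx₄ : x₄ < 1) (hzx : z ≤ x₁)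
    (hy₁ : y₁ < 1) (hy₂ : y₂ < 1) (hy₃ : y₃ < 1) :
    T * q ^ 3 * (1 - z * q) * ((1 - y₁) * (1 - y₂) * (1 - y₃)) /
        ((1 - x₁ * q) * (1 - x₂ * q) * (1 - x₃ * q) * (1 - x₄ * q)) <
      T * (1 - z) * ((1 - y₁ * q) * (1 - y₂ * q) * (1 - y₃ * q)) /
        ((1 - x₁) * (1 - x₂) * (1 - x₃) * (1 - x₄)) := by
  have one_sub_pos {x : ℝ} (hx0 : 0 ≤ x) (hx : x < 1) : 0 < 1 - x * q := by nlinarith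
  have hX₁ := one_sub_pos hx₁0 hx₁
  have hX₂ := one_sub_pos hx₂0 hx₂
  have hX₃ := one_sub_pos hx₃0 hx₃
  have hX₄ := one_sub_pos hx₄0 hx₄
  have numer_pos {y : ℝ} (hy : y < 1) : 0 < q * (1 - y) := mul_pos hq0 (sub_pos.2 hy)
  have numer_lt {y : ℝ} : q * (1 - y) < 1 - y * q := by linarith
  have denom_le {x : ℝ} (hx0 : 0 ≤ x) (hx : x < 1) : (1 - x * q)⁻¹ ≤ (1 - x)⁻¹ :=
    inv_anti₀ (sub_pos.2 hx) (by nlinarith)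
  have hxz : (1 - z * q) / (1 - x₁ * q) ≤ (1 - z) / (1 - x₁) := by
    rw [div_le_div_iff₀ hX₁ (sub_pos.2 hx₁)]
    nlinarith [mul_nonneg (sub_nonneg.2 hzx) (sub_nonneg.2 hq1.le)]
  have hY : (q * (1 - y₁)) * (q * (1 - y₂)) * (q * (1 - y₃)) <
      (1 - y₁ * q) * (1 - y₂ * q) * (1 - y₃ * q) := by
    have h₁ := numer_pos hy₁
    have h₂ := numer_pos hy₂
    have h₃ := numer_pos hy₃
    exact mul_lt_mul'' (mul_lt_mul'' numer_lt numer_lt h₁.le h₂.le) numer_lt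
      (mul_pos h₁ h₂).le h₃.le
  have hZ : 0 < (1 - z) / (1 - x₁) := div_pos (sub_pos.2 hz) (sub_pos.2 hx₁)
  have h₂ := inv_pos.2 hX₂
  have h₃ := inv_pos.2 hX₃
  have h₄ := inv_pos.2 hX₄
  have hD : (1 - z * q) / (1 - x₁ * q) *
        ((1 - x₂ * q)⁻¹ * (1 - x₃ * q)⁻¹ * (1 - x₄ * q)⁻¹) ≤
      (1 - z) / (1 - x₁) * ((1 - x₂)⁻¹ * (1 - x₃)⁻¹ * (1 - x₄)⁻¹) := by
    have hd₂ := denom_le hx₂0 hx₂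
    have hd₃ := denom_le hx₃0 hx₃
    have hd₄ := denom_le hx₄0 hx₄
    have hi₂ := h₂.trans_le hd₂
    have hi₃ := h₃.trans_le hd₃
    gcongr
  have hDpos : 0 < (1 - z) / (1 - x₁) * ((1 - x₂)⁻¹ * (1 - x₃)⁻¹ * (1 - x₄)⁻¹) := by
    have := sub_pos.2 hx₂
    have := sub_pos.2 hx₃
    have := sub_pos.2 hx₄
    positivity
  have hYpos := mul_pos (mul_pos (numer_pos hy₁) (numer_pos hy₂)) (numer_pos hy₃)
  calc
    _ = T * ((q * (1 - y₁)) * (q * (1 - y₂)) * (q * (1 - y₃)) * ((1 - z * q) / (1 - x₁ * q) *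
        ((1 - x₂ * q)⁻¹ * (1 - x₃ * q)⁻¹ * (1 - x₄ * q)⁻¹))) := by
      simp only [div_eq_mul_inv, mul_inv]; ring
    _ < T * ((1 - y₁ * q) * (1 - y₂ * q) * (1 - y₃ * q) *
        ((1 - z) / (1 - x₁) * ((1 - x₂)⁻¹ * (1 - x₃)⁻¹ * (1 - x₄)⁻¹))) :=
      mul_lt_mul_of_pos_left
        ((mul_le_mul_of_nonneg_left hD hYpos.le).trans_lt (mul_lt_mul_of_pos_right hY hDpos)) hT
    _ = _ := by simp only [div_eq_mul_inv, mul_inv]; ring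

theorem pow_eq_pow_mul {q : ℝ} {m n : ℕ} (h : m = n + 1) : q ^ m = q ^ n * q := by
  rw [h, pow_succ]

/-- The ratio R(s) of the absolute values of consecutive terms of the
alternating sum defining the tetrahedral coefficient is strictly decreasing. -/
theorem stmt_5 (t : ℝ) (ht0 : 0 < t) (ht1 : t < 1) (a b e c d f : ℕ)
    (h : TetAdmissible a b e c d f) :
    ∀ s : ℕ,
      max ((a + d + e) / 2) (max ((b + c + e) / 2) (max ((a + b + f) / 2) ((c + d + f) / 2))) ≤ s →
      s + 2 ≤ min ((a + b + c + d) / 2) (min ((a + c + e + f) / 2) ((b + d + e + f) / 2)) →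
      (fun s : ℕ =>
        t ^ (12 * (s : ℤ) - 4 * ((a : ℤ) + b + c + d + e + f) + 4) *
          (1 - (t ^ 4) ^ (s + 2)) *
          ((1 - (t ^ 4) ^ ((a + b + c + d) / 2 - s)) *
            (1 - (t ^ 4) ^ ((a + c + e + f) / 2 - s)) *
            (1 - (t ^ 4) ^ ((b + d + e + f) / 2 - s))) /
          ((1 - (t ^ 4) ^ (s + 1 - (a + d + e) / 2)) *
            (1 - (t ^ 4) ^ (s + 1 - (b + c + e) / 2)) *
            (1 - (t ^ 4) ^ (s + 1 - (a + b + f) / 2)) *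
            (1 - (t ^ 4) ^ (s + 1 - (c + d + f) / 2)))) (s + 1) <
      (fun s : ℕ =>
        t ^ (12 * (s : ℤ) - 4 * ((a : ℤ) + b + c + d + e + f) + 4) *
          (1 - (t ^ 4) ^ (s + 2)) *
          ((1 - (t ^ 4) ^ ((a + b + c + d) / 2 - s)) *
            (1 - (t ^ 4) ^ ((a + c + e + f) / 2 - s)) *
            (1 - (t ^ 4) ^ ((b + d + e + f) / 2 - s))) /
          ((1 - (t ^ 4) ^ (s + 1 - (a + d + e) / 2)) *
            (1 - (t ^ 4) ^ (s + 1 - (b + c + e) / 2)) *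
            (1 - (t ^ 4) ^ (s + 1 - (a + b + f) / 2)) *
            (1 - (t ^ 4) ^ (s + 1 - (c + d + f) / 2)))) s := by
  intro s hm hM
  beta_reduce
  generalize (a + d + e) / 2 = A₁ at hm hM ⊢
  generalize (b + c + e) / 2 = A₂ at hm hM ⊢
  generalize (a + b + f) / 2 = A₃ at hm hM ⊢
  generalize (c + d + f) / 2 = A₄ at hm hM ⊢
  generalize (a + b + c + d) / 2 = B₁ at hm hM ⊢
  generalize (a + c + e + f) / 2 = B₂ at hm hM ⊢
  generalize (b + d + e + f) / 2 = B₃ at hm hM ⊢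
  simp only [max_le_iff, le_min_iff] at hm hM
  obtain ⟨hA₁, hA₂, hA₃, hA₄⟩ := hm
  obtain ⟨hB₁, hB₂, hB₃⟩ := hM
  have hq0 : 0 < t ^ 4 := pow_pos ht0 4
  have hq1 : t ^ 4 < 1 := pow_lt_one₀ ht0.le ht1 (by norm_num)
  have hpow {n : ℕ} (hn : n ≠ 0) : (t ^ 4) ^ n < 1 := pow_lt_one₀ hq0.le hq1 hn
  have hA {A : ℕ} (hs : A ≤ s) : (t ^ 4) ^ (s + 1 + 1 - A) = (t ^ 4) ^ (s + 1 - A) * t ^ 4 :=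
    pow_eq_pow_mul (Nat.sub_add_comm (Nat.le_succ_of_le hs))
  have hB {B : ℕ} (hs : s + 2 ≤ B) : (t ^ 4) ^ (B - s) = (t ^ 4) ^ (B - (s + 1)) * t ^ 4 :=
    pow_eq_pow_mul (by omega)
  have hT : t ^ (12 * ((s + 1 : ℕ) : ℤ) - 4 * ((a : ℤ) + b + c + d + e + f) + 4) =
      t ^ (12 * (s : ℤ) - 4 * ((a : ℤ) + b + c + d + e + f) + 4) * (t ^ 4) ^ 3 := by
    have h12 : (t ^ 4) ^ 3 = t ^ (12 : ℤ) := by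
      rw [← pow_mul]
      exact (zpow_natCast t 12).symm
    rw [h12, ← zpow_add₀ ht0.ne', Nat.cast_succ]
    ring_nf
  rw [hT, hA hA₁, hA hA₂, hA hA₃, hA hA₄, hB hB₁, hB hB₂, hB hB₃,
    show s + 1 + 2 = (s + 2) + 1 by ring, pow_succ (t ^ 4) (s + 2)]
  exact qratio_step_lt (zpow_pos ht0 _) hq0 hq1 (hpow (by omega))
    (pow_nonneg hq0.le _) (hpow (by omega)) (pow_nonneg hq0.le _) (hpow (by omega))
    (pow_nonneg hq0.le _) (hpow (by omega)) (pow_nonneg hq0.le _) (hpow (by omega))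
    (pow_le_pow_of_le_one hq0.le hq1.le (by omega))
    (hpow (by omega)) (hpow (by omega)) (hpow (by omega))
end

section
/- Fix a real number t with 0 < t < 1. Given an admissible labeling (a,b,e;c,d,f) of the edges of a tetrahedron, the sequence k ↦ t^{−4k}·{a+2k, b+2k, e; c+2k, d+2k, f}_u of scaled unitary 6j-symbols converges as k → ∞. -/
open Filter Finset

theorem qint_succ_ne_zero {t : ℝ} (ht0 : 0 < t) (ht1 : t < 1) (n : ℕ) : qint t (n + 1) ≠ 0 := by
  have key : ∀ m : ℕ, m ≠ 0 → t ^ m - (t ^ m)⁻¹ ≠ 0 := fun m hm => by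
    have h1 : t ^ m < 1 := pow_lt_one₀ ht0.le ht1 hm
    have h2 : 1 < (t ^ m)⁻¹ := (one_lt_inv₀ (pow_pos ht0 m)).2 h1
    linarith
  exact div_ne_zero (key _ (by omega)) (key _ (by omega))

theorem qfact_ne_zero {t : ℝ} (ht0 : 0 < t) (ht1 : t < 1) (n : ℕ) : qfact t n ≠ 0 := by
  induction n with
  | zero => simp [qfact]
  | succ n ih => exact mul_ne_zero (qint_succ_ne_zero ht0 ht1 n) ih

/-- The sequence `f` is asymptotic to a nonzero multiple of `([2k]!)^i * t^(-4kn)`. -/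
def HasQGrowth (t : ℝ) (f : ℕ → ℝ) (i n : ℤ) : Prop :=
  ∃ c : ℝ, c ≠ 0 ∧
    Tendsto (fun k => f k * (qfact t (2 * k) ^ i)⁻¹ * (t ^ (4 * k)) ^ n) atTop (nhds c)

namespace HasQGrowth

variable {t : ℝ} {f g : ℕ → ℝ} {i j m n : ℤ}

theorem const {c : ℝ} (hc : c ≠ 0) : HasQGrowth t (fun _ => c) 0 0 :=
  ⟨c, hc, by simp⟩

theorem mul (ht0 : 0 < t) (ht1 : t < 1) (hf : HasQGrowth t f i m) (hg : HasQGrowth t g j n) :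
    HasQGrowth t (fun k => f k * g k) (i + j) (m + n) := by
  obtain ⟨c, hc, hf⟩ := hf
  obtain ⟨d, hd, hg⟩ := hg
  refine ⟨c * d, mul_ne_zero hc hd, (hf.mul hg).congr fun k => ?_⟩
  rw [zpow_add₀ (qfact_ne_zero ht0 ht1 _), zpow_add₀ (pow_pos ht0 _).ne', mul_inv]
  ring

theorem inv (hf : HasQGrowth t f i m) : HasQGrowth t (fun k => (f k)⁻¹) (-i) (-m) := by
  obtain ⟨c, hc, hf⟩ := hf
  refine ⟨c⁻¹, inv_ne_zero hc, (hf.inv₀ hc).congr fun k => ?_⟩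
  rw [zpow_neg, zpow_neg, mul_inv, mul_inv]

theorem div (ht0 : 0 < t) (ht1 : t < 1) (hf : HasQGrowth t f i m) (hg : HasQGrowth t g j n) :
    HasQGrowth t (fun k => f k / g k) (i - j) (m - n) := by
  simpa only [div_eq_mul_inv, sub_eq_add_neg] using hf.mul ht0 ht1 hg.inv

theorem qint_add (ht0 : 0 < t) (ht1 : t < 1) (x : ℕ) :
    HasQGrowth t (fun k => qint t (x + 2 * k)) 0 1 := by
  have hd : t ^ 2 - (t ^ 2)⁻¹ ≠ 0 := by
    have h1 : t ^ 2 < 1 := pow_lt_one₀ ht0.le ht1 two_ne_zero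
    have h2 : 1 < (t ^ 2)⁻¹ := (one_lt_inv₀ (pow_pos ht0 2)).2 h1
    linarith
  have hw : Tendsto (fun k : ℕ => t ^ (4 * k)) atTop (nhds 0) := by
    simp_rw [pow_mul]
    exact tendsto_pow_atTop_nhds_zero_of_lt_one (by positivity)
      (pow_lt_one₀ ht0.le ht1 four_ne_zero)
  refine ⟨(t ^ (2 * x) * (0 * 0) - (t ^ (2 * x))⁻¹) / (t ^ 2 - (t ^ 2)⁻¹),
    div_ne_zero ?_ hd, ((((hw.mul hw).const_mul _).sub_const _).div_const _).congr fun k => ?_⟩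
  · simp [ht0.ne']
  · have hk : t ^ (4 * k) ≠ 0 := (pow_pos ht0 _).ne'
    simp only [qint]
    rw [show 2 * (x + 2 * k) = 2 * x + 4 * k by ring, pow_add t (2 * x), mul_inv]
    simp only [zpow_zero, inv_one, mul_one, zpow_one]
    rw [div_mul_eq_mul_div, sub_mul, mul_assoc, mul_assoc (t ^ (2 * x))⁻¹, inv_mul_cancel₀ hk,
      mul_one]

theorem qfact_add (ht0 : 0 < t) (ht1 : t < 1) (x : ℕ) :
    HasQGrowth t (fun k => qfact t (x + 2 * k)) 1 x := by
  induction x with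
  | zero =>
    refine ⟨1, one_ne_zero, tendsto_const_nhds.congr fun k => ?_⟩
    simp [qfact_ne_zero ht0 ht1]
  | succ x ih =>
    have h := (qint_add ht0 ht1 (x + 1)).mul ht0 ht1 ih
    simp only [add_right_comm x 1] at h
    convert h using 1
    · funext k
      rw [add_right_comm, qfact]
    · norm_num
    · push_cast
      ring

/-- A factor `t^(4k)` compensates growth of order at most one. -/
theorem exists_tendsto (ht0 : 0 < t) (ht1 : t < 1) (hf : HasQGrowth t f 0 n) (hn : n ≤ 1) :
    ∃ L, Tendsto (fun k => t ^ (4 * k) * f k) atTop (nhds L) := by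
  obtain ⟨c, -, hf⟩ := hf
  obtain ⟨N, hN⟩ := Int.eq_ofNat_of_zero_le (sub_nonneg.2 hn)
  have hw : ∃ L, Tendsto (fun k : ℕ => (t ^ (4 * k)) ^ N) atTop (nhds L) := by
    rcases eq_or_ne N 0 with rfl | hN
    · exact ⟨1, by simp⟩
    · refine ⟨0, ?_⟩
      have : ∀ k, (t ^ (4 * k)) ^ N = (t ^ (4 * N)) ^ k := fun k => by
        rw [← pow_mul, ← pow_mul]
        ring_nf
      simp_rw [this]
      exact tendsto_pow_atTop_nhds_zero_of_lt_one (by positivity)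
        (pow_lt_one₀ ht0.le ht1 (by omega))
  obtain ⟨L, hL⟩ := hw
  refine ⟨c * L, (hf.mul hL).congr fun k => ?_⟩
  have hk : t ^ (4 * k) ≠ 0 := (pow_pos ht0 _).ne'
  rw [mul_assoc, ← zpow_natCast (t ^ (4 * k)) N, ← zpow_add₀ hk, show (N : ℤ) = 1 - n from hN.symm,
    add_sub_cancel, zpow_zero, inv_one, mul_one, zpow_one, mul_comm]

end HasQGrowth

theorem neg_one_pow_add_two_mul (s k : ℕ) : (-1 : ℝ) ^ (s + 2 * k) = (-1) ^ s := by
  simp [pow_add, pow_mul]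

theorem Admissible.qtheta_hasQGrowth {t : ℝ} (ht0 : 0 < t) (ht1 : t < 1) {a b e : ℕ}
    (h : Admissible a b e) :
    HasQGrowth t (fun k => qtheta t (a + 2 * k) (b + 2 * k) e) 0 1 := by
  obtain ⟨⟨r, hr⟩, h1, h2, h3⟩ := h
  have hF := fun n => HasQGrowth.const (t := t) (qfact_ne_zero ht0 ht1 n)
  have hG := HasQGrowth.qfact_add ht0 ht1
  have hs := HasQGrowth.const (t := t) (pow_ne_zero ((a + b + e) / 2) (neg_ne_zero.2 one_ne_zero))
  convert (hs.mul ht0 ht1 ((((hG ((a + b + e) / 2 + 1)).mul ht0 ht1 (hG ((a + b - e) / 2))).mul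
    ht0 ht1 (hF ((a + e - b) / 2))).mul ht0 ht1 (hF ((b + e - a) / 2)))).div ht0 ht1
    (((hG a).mul ht0 ht1 (hG b)).mul ht0 ht1 (hF e)) using 1
  · funext k
    rw [qtheta, show (a + 2 * k + (b + 2 * k) + e) / 2 = (a + b + e) / 2 + 2 * k by omega,
      show (a + 2 * k + (b + 2 * k) - e) / 2 = (a + b - e) / 2 + 2 * k by omega,
      show a + 2 * k + e - (b + 2 * k) = a + e - b by omega,
      show b + 2 * k + e - (a + 2 * k) = b + e - a by omega, neg_one_pow_add_two_mul,
      add_right_comm _ (2 * k) 1]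
  · omega
  · omega

theorem Admissible.strandProd_hasQGrowth {t : ℝ} (ht0 : 0 < t) (ht1 : t < 1) {a b e : ℕ}
    (h : Admissible a b e) :
    HasQGrowth t (fun k => strandProd t (a + 2 * k) (b + 2 * k) e) 1 ((a + b - e) / 2 : ℕ) := by
  obtain ⟨⟨r, hr⟩, h1, h2, h3⟩ := h
  have hF := fun n => HasQGrowth.const (t := t) (qfact_ne_zero ht0 ht1 n)
  convert ((HasQGrowth.qfact_add ht0 ht1 ((a + b - e) / 2)).mul ht0 ht1
    (hF ((b + e - a) / 2))).mul ht0 ht1 (hF ((a + e - b) / 2)) using 1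
  · funext k
    rw [strandProd, show (a + 2 * k + (b + 2 * k) - e) / 2 = (a + b - e) / 2 + 2 * k by omega,
      show a + 2 * k + e - (b + 2 * k) = a + e - b by omega,
      show b + 2 * k + e - (a + 2 * k) = b + e - a by omega]
  · omega
  · omega

/-- The reciprocal square root of a sequence with nonzero limit converges, also when the limit is
negative, because `Real.sqrt` vanishes on negative numbers. -/
theorem exists_tendsto_inv_sqrt {u : ℕ → ℝ} {c : ℝ} (hc : c ≠ 0) (hu : Tendsto u atTop (nhds c)) :
    ∃ L, Tendsto (fun k => (√(u k))⁻¹) atTop (nhds L) := by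
  rcases hc.lt_or_gt with hc | hc
  · refine ⟨0, tendsto_const_nhds.congr' ?_⟩
    filter_upwards [hu.eventually_lt_const hc] with k hk
    rw [Real.sqrt_eq_zero_of_nonpos hk.le, inv_zero]
  · exact ⟨_, hu.sqrt.inv₀ (Real.sqrt_pos.2 hc).ne'⟩

theorem Admissible.two_mul_strand {a b e : ℕ} (h : Admissible a b e) :
    2 * ((a + b - e) / 2) + e = a + b := by
  obtain ⟨⟨r, hr⟩, -, -, h⟩ := h
  omega

theorem Admissible.two_mul_half {a b e : ℕ} (h : Admissible a b e) :
    2 * ((a + b + e) / 2) = a + b + e :=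
  Nat.two_mul_div_two_of_even h.1

theorem TetAdmissible.exists_tendsto_tet {t : ℝ} (ht0 : 0 < t) (ht1 : t < 1) {a b e c d f : ℕ}
    (h : TetAdmissible a b e c d f) (hbd : e + f ≤ b + d) :
    ∃ L, Tendsto (fun k => t ^ (4 * k) *
      Tet t (a + 2 * k) (b + 2 * k) e (c + 2 * k) (d + 2 * k) f) atTop (nhds L) := by
  obtain ⟨hade, hbce, habf, hcdf⟩ := h
  have hF := fun n => HasQGrowth.const (t := t) (qfact_ne_zero ht0 ht1 n)
  have hG := HasQGrowth.qfact_add ht0 ht1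
  have hpre := ((((hade.strandProd_hasQGrowth ht0 ht1).mul ht0 ht1
    (hbce.strandProd_hasQGrowth ht0 ht1)).mul ht0 ht1
    (habf.strandProd_hasQGrowth ht0 ht1)).mul ht0 ht1
    (hcdf.strandProd_hasQGrowth ht0 ht1)).div ht0 ht1
    ((((((hG a).mul ht0 ht1 (hG b)).mul ht0 ht1 (hG c)).mul ht0 ht1 (hG d)).mul ht0 ht1
      (hF e)).mul ht0 ht1 (hF f))
  have h₁ := hade.two_mul_strand
  have h₂ := hbce.two_mul_strand
  have h₃ := habf.two_mul_strand
  have h₄ := hcdf.two_mul_strand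
  have ha₁ := hade.two_mul_half
  have ha₂ := hbce.two_mul_half
  have ha₃ := habf.two_mul_half
  have ha₄ := hcdf.two_mul_half
  clear hade hbce habf hcdf
  have hB₁ : 2 * ((a + b + c + d) / 2) = a + b + c + d := by omega
  have hB₂ : 2 * ((a + c + e + f) / 2) = a + c + e + f := by omega
  have hB₃ : 2 * ((b + d + e + f) / 2) = b + d + e + f := by omega
  set I := Finset.Icc
    (max ((a + d + e) / 2) (max ((b + c + e) / 2) (max ((a + b + f) / 2) ((c + d + f) / 2))))
    (min ((a + c + e + f) / 2) ((b + d + e + f) / 2)) with hI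
  have hterm : ∀ s ∈ I, ∃ L, Tendsto (fun k => t ^ (4 * k) *
      ((strandProd t (a + 2 * k) (d + 2 * k) e * strandProd t (b + 2 * k) (c + 2 * k) e *
          strandProd t (a + 2 * k) (b + 2 * k) f * strandProd t (c + 2 * k) (d + 2 * k) f) /
        (qfact t (a + 2 * k) * qfact t (b + 2 * k) * qfact t (c + 2 * k) * qfact t (d + 2 * k) *
          qfact t e * qfact t f) *
        (((-1 : ℝ) ^ s * qfact t (s + 1 + 2 * k)) /
        (qfact t ((a + b + c + d) / 2 - s + 2 * k) * qfact t ((a + c + e + f) / 2 - s) *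
          qfact t ((b + d + e + f) / 2 - s) *
          qfact t (s - (a + d + e) / 2) * qfact t (s - (b + c + e) / 2) *
          qfact t (s - (a + b + f) / 2) * qfact t (s - (c + d + f) / 2))))) atTop (nhds L) := by
    intro s hs
    rw [hI, Finset.mem_Icc, le_min_iff] at hs
    obtain ⟨-, hs₂, hs₃⟩ := hs
    have hs₁ : s ≤ (a + b + c + d) / 2 := by omega
    have hs' := HasQGrowth.const (t := t) (pow_ne_zero s (neg_ne_zero.2 one_ne_zero))
    have key := hpre.mul ht0 ht1 ((hs'.mul ht0 ht1 (hG (s + 1))).div ht0 ht1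
      (((((((hG ((a + b + c + d) / 2 - s)).mul ht0 ht1 (hF ((a + c + e + f) / 2 - s))).mul ht0 ht1
        (hF ((b + d + e + f) / 2 - s))).mul ht0 ht1 (hF (s - (a + d + e) / 2))).mul ht0 ht1
        (hF (s - (b + c + e) / 2))).mul ht0 ht1 (hF (s - (a + b + f) / 2))).mul ht0 ht1
        (hF (s - (c + d + f) / 2))))
    refine HasQGrowth.exists_tendsto ht0 ht1 (n := 2 * s + 1 - ((a + c + e + f) / 2 : ℕ) -
      ((b + d + e + f) / 2 : ℕ)) ?_ (by omega)
    convert key using 1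
    · norm_num
    · clear key hs' hpre hF hG hI
      omega
  choose! L hL using hterm
  refine ⟨∑ s ∈ I, L s, (tendsto_finsetSum I hL).congr fun k => ?_⟩
  rw [← Finset.mul_sum, ← Finset.mul_sum, Tet]
  congr 2
  have hA : ∀ x y z, (x + 2 * k + (y + 2 * k) + z) / 2 = (x + y + z) / 2 + 2 * k := by omega
  have hB : ∀ x y z w, (x + 2 * k + (y + 2 * k) + z + w) / 2 = (x + y + z + w) / 2 + 2 * k := by
    omega
  have hC : (a + 2 * k + (b + 2 * k) + (c + 2 * k) + (d + 2 * k)) / 2 =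
      (a + b + c + d) / 2 + 2 * k + 2 * k := by omega
  have hIcc : Finset.Icc
      (max ((a + d + e) / 2 + 2 * k) (max ((b + c + e) / 2 + 2 * k)
        (max ((a + b + f) / 2 + 2 * k) ((c + d + f) / 2 + 2 * k))))
      (min ((a + b + c + d) / 2 + 2 * k + 2 * k)
        (min ((a + c + e + f) / 2 + 2 * k) ((b + d + e + f) / 2 + 2 * k))) =
      I.map (addRightEmbedding (2 * k)) := by
    rw [hI, Finset.map_add_right_Icc, max_add, max_add, max_add, min_add, min_eq_right]
    omega
  rw [hC, hA, hA, hA, hA, hB, hB, hIcc, Finset.sum_map]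
  refine Finset.sum_congr rfl fun s hs => ?_
  rw [hI, Finset.mem_Icc, le_min_iff] at hs
  rw [addRightEmbedding_apply, neg_one_pow_add_two_mul, add_right_comm s (2 * k) 1]
  simp only [Nat.add_sub_add_right]
  rw [Nat.sub_add_comm (by omega : s ≤ (a + b + c + d) / 2)]

theorem TetAdmissible.exists_tendsto_sixj {t : ℝ} (ht0 : 0 < t) (ht1 : t < 1) {a b e c d f : ℕ}
    (h : TetAdmissible a b e c d f) (hbd : e + f ≤ b + d) :
    ∃ L, Tendsto (fun k => (t ^ (4 * k))⁻¹ *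
      sixj t (a + 2 * k) (b + 2 * k) e (c + 2 * k) (d + 2 * k) f) atTop (nhds L) := by
  obtain ⟨L, hL⟩ := h.exists_tendsto_tet ht0 ht1 hbd
  obtain ⟨hade, hbce, habf, hcdf⟩ := h
  obtain ⟨θ, hθ, hlim⟩ := (((hade.qtheta_hasQGrowth ht0 ht1).mul ht0 ht1
    (hbce.qtheta_hasQGrowth ht0 ht1)).mul ht0 ht1 (habf.qtheta_hasQGrowth ht0 ht1)).mul ht0 ht1
    (hcdf.qtheta_hasQGrowth ht0 ht1)
  obtain ⟨R, hR⟩ := exists_tendsto_inv_sqrt hθ hlim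
  refine ⟨L * R, (hL.mul hR).congr fun k => ?_⟩
  have hk : 0 < t ^ (4 * k) := pow_pos ht0 _
  have hw : (t ^ (4 * k)) ^ (1 + 1 + 1 + 1 : ℤ) = ((t ^ (4 * k)) ^ 2) ^ 2 := by
    rw [← pow_mul, ← zpow_natCast]
    norm_num
  rw [hw, sixj, Real.sqrt_mul' _ (sq_nonneg _), Real.sqrt_sq (sq_nonneg _)]
  simp only [add_zero, zpow_zero, inv_one, mul_one]
  rw [mul_inv, div_eq_mul_inv]
  field_simp

/-- The sequence k ↦ t^{-4k}·{a+2k,b+2k,e;c+2k,d+2k,f}_u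
converges. -/
theorem stmt_12 (t : ℝ) (ht0 : 0 < t) (ht1 : t < 1) (a b e c d f : ℕ)
    (h : TetAdmissible a b e c d f) :
    ∃ L : ℝ, Filter.Tendsto
      (fun k => (t ^ (4 * k))⁻¹ *
        sixj t (a + 2 * k) (b + 2 * k) e (c + 2 * k) (d + 2 * k) f)
      Filter.atTop (nhds L) := by
  obtain ⟨K, hK⟩ : ∃ K, K = e + f := ⟨_, rfl⟩
  have h' : TetAdmissible (a + 2 * K) (b + 2 * K) e (c + 2 * K) (d + 2 * K) f := by
    simp only [TetAdmissible, Admissible, Nat.even_iff] at h ⊢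
    omega
  obtain ⟨L, hL⟩ := h'.exists_tendsto_sixj ht0 ht1 (by omega)
  refine ⟨(t ^ (4 * K))⁻¹ * L, (tendsto_add_atTop_iff_nat K).1
    ((hL.const_mul _).congr fun k => ?_)⟩
  have hshift : ∀ x, x + 2 * K + 2 * k = x + 2 * (k + K) := fun x => by ring
  rw [← mul_assoc, ← mul_inv, ← pow_add, ← mul_add, add_comm K k]
  rw [hshift, hshift, hshift, hshift]
end
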